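/- Let s1, s3 > 0 and s2 ∈ (0,1). The vector fields ς1 = ∂x, ς2 = ∂y, and ς3 = y∂x − x∂y − ∂θ on ℝ^5 are infinitesimal symmetries of the distribution spanned by ξ4 and ξ5: for each i ∈ {1,2,3}, the Lie brackets [ς_i, ξ4] and [ς_i, ξ5] vanish identically, i.e., Dξ4(p)(ς_i(p)) − Dς_i(p)(ξ4(p)) = 0 and Dξ5(p)(ς_i(p)) − Dς_i(p)(ξ5(p)) = 0 for all p ∈ ℝ^5. -/

import Mathlib

/-!
The coefficients of `ξ₄` and `ξ₅` do not involve `x` and `y`, so both fields are invariant under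
the translations generated by the constant fields `ς₁` and `ς₂`. For the rotation generator `ς₃`,
the coefficients of `ξ₄` do not involve `θ` and `ξ₄` has no `∂x`, `∂y` part, so both terms of
`[ς₃, ξ₄]` vanish; in `[ς₃, ξ₅]` both terms equal `sin θ ∂x − cos θ ∂y` and cancel.
The Jacobians are computed coordinate by coordinate in the lemmas `fderiv_snake*`.
-/

open Real

/-- `Υ¹ = sin(φ+θ)dx − cos(φ+θ)dy − (s₂cos φ − s₁)dθ + s₁dφ` at `p = (x,y,θ,φ,ψ)`. -/
noncomputable def snakeUps1 (s1 s2 : ℝ) (p : Fin 5 → ℝ) : (Fin 5 → ℝ) →ₗ[ℝ] ℝ :=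
  Real.sin (p 3 + p 2) • LinearMap.proj 0 - Real.cos (p 3 + p 2) • LinearMap.proj 1
    - (s2 * Real.cos (p 3) - s1) • LinearMap.proj 2 + s1 • LinearMap.proj 3

/-- `Υ² = sin θ dx − cos θ dy`. -/
noncomputable def snakeUps2 (p : Fin 5 → ℝ) : (Fin 5 → ℝ) →ₗ[ℝ] ℝ :=
  Real.sin (p 2) • LinearMap.proj 0 - Real.cos (p 2) • LinearMap.proj 1

/-- `Υ³ = sin(ψ+θ)dx − cos(ψ+θ)dy − ((1−s₂)cos ψ − s₃)dθ − s₃dψ`. -/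
noncomputable def snakeUps3 (s2 s3 : ℝ) (p : Fin 5 → ℝ) : (Fin 5 → ℝ) →ₗ[ℝ] ℝ :=
  Real.sin (p 4 + p 2) • LinearMap.proj 0 - Real.cos (p 4 + p 2) • LinearMap.proj 1
    - ((1 - s2) * Real.cos (p 4) - s3) • LinearMap.proj 2 - s3 • LinearMap.proj 4

/-- `ξ₁ = cos θ ∂x + sin θ ∂y + ((s₁²−s₂²)/s₁³) sin φ ∂φ + (((1−s₂)²−s₃²)/s₃³) sin ψ ∂ψ`. -/
noncomputable def snakeXi1 (s1 s2 s3 : ℝ) (p : Fin 5 → ℝ) : Fin 5 → ℝ :=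
  ![Real.cos (p 2), Real.sin (p 2), 0,
    (s1 ^ 2 - s2 ^ 2) / s1 ^ 3 * Real.sin (p 3),
    ((1 - s2) ^ 2 - s3 ^ 2) / s3 ^ 3 * Real.sin (p 4)]

/-- `ξ₂ = −(1/s₁²)(1 − (s₂/s₁)cos φ)∂φ − (1/s₃²)(1 − ((1−s₂)/s₃)cos ψ)∂ψ`. -/
noncomputable def snakeXi2 (s1 s2 s3 : ℝ) (p : Fin 5 → ℝ) : Fin 5 → ℝ :=
  ![0, 0, 0, -(1 / s1 ^ 2 * (1 - s2 / s1 * Real.cos (p 3))),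
    -(1 / s3 ^ 2 * (1 - (1 - s2) / s3 * Real.cos (p 4)))]

/-- `ξ₃ = sin θ ∂x − cos θ ∂y − (1/s₁)((s₂/s₁) − cos φ)∂φ + (1/s₃)(((1−s₂)/s₃) − cos ψ)∂ψ`. -/
noncomputable def snakeXi3 (s1 s2 s3 : ℝ) (p : Fin 5 → ℝ) : Fin 5 → ℝ :=
  ![Real.sin (p 2), -Real.cos (p 2), 0,
    -(1 / s1 * (s2 / s1 - Real.cos (p 3))),
    1 / s3 * ((1 - s2) / s3 - Real.cos (p 4))]

/-- `ξ₄ = ∂θ − (1 − (s₂/s₁)cos φ)∂φ − (1 − ((1−s₂)/s₃)cos ψ)∂ψ`. -/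
noncomputable def snakeXi4 (s1 s2 s3 : ℝ) (p : Fin 5 → ℝ) : Fin 5 → ℝ :=
  ![0, 0, 1, -(1 - s2 / s1 * Real.cos (p 3)), -(1 - (1 - s2) / s3 * Real.cos (p 4))]

/-- `ξ₅ = cos θ ∂x + sin θ ∂y + (1/s₁)sin φ ∂φ − (1/s₃)sin ψ ∂ψ`. -/
noncomputable def snakeXi5 (s1 s3 : ℝ) (p : Fin 5 → ℝ) : Fin 5 → ℝ :=
  ![Real.cos (p 2), Real.sin (p 2), 0, 1 / s1 * Real.sin (p 3), -(1 / s3 * Real.sin (p 4))]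

/-- `ς₁ = ∂x`. -/
def snakeSigma1 (_p : Fin 5 → ℝ) : Fin 5 → ℝ := ![1, 0, 0, 0, 0]

/-- `ς₂ = ∂y`. -/
def snakeSigma2 (_p : Fin 5 → ℝ) : Fin 5 → ℝ := ![0, 1, 0, 0, 0]

/-- `ς₃ = y∂x − x∂y − ∂θ`. -/
def snakeSigma3 (p : Fin 5 → ℝ) : Fin 5 → ℝ := ![p 1, -p 0, -1, 0, 0]

lemma fderiv_coord {X : (Fin 5 → ℝ) → Fin 5 → ℝ} {p : Fin 5 → ℝ}
    (hd : ∀ i, DifferentiableAt ℝ (fun q => X q i) p) (v : Fin 5 → ℝ) (i : Fin 5) :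
    fderiv ℝ X p v i = fderiv ℝ (fun q => X q i) p v := by
  rw [fderiv_apply (differentiableAt_pi.2 hd)]
  rfl

lemma fderiv_snakeXi4 (s1 s2 s3 : ℝ) (p v : Fin 5 → ℝ) :
    fderiv ℝ (snakeXi4 s1 s2 s3) p v =
      ![0, 0, 0, -(s2 / s1 * Real.sin (p 3) * v 3),
        -((1 - s2) / s3 * Real.sin (p 4) * v 4)] := by
  have hd : ∀ i, DifferentiableAt ℝ (fun q => snakeXi4 s1 s2 s3 q i) p := by
    intro i
    fin_cases i <;> simp [snakeXi4] <;> fun_prop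
  have h3 := (hasFDerivAt_apply (𝕜 := ℝ) (F' := fun _ : Fin 5 => ℝ) 3 p).cos
  have h4 := (hasFDerivAt_apply (𝕜 := ℝ) (F' := fun _ : Fin 5 => ℝ) 4 p).cos
  have e3 := ((h3.const_mul (s2 / s1)).const_sub 1).neg.fderiv
  have e4 := ((h4.const_mul ((1 - s2) / s3)).const_sub 1).neg.fderiv
  ext i
  rw [fderiv_coord hd]
  fin_cases i
  · simp [snakeXi4]
  · simp [snakeXi4]
  · simp [snakeXi4]
  · refine (congrArg (· v) e3).trans ?_
    simp
    ring
  · refine (congrArg (· v) e4).trans ?_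
    simp
    ring

lemma fderiv_snakeXi5 (s1 s3 : ℝ) (p v : Fin 5 → ℝ) :
    fderiv ℝ (snakeXi5 s1 s3) p v =
      ![-(Real.sin (p 2) * v 2), Real.cos (p 2) * v 2, 0, 1 / s1 * (Real.cos (p 3) * v 3),
        -(1 / s3 * (Real.cos (p 4) * v 4))] := by
  have hd : ∀ i, DifferentiableAt ℝ (fun q => snakeXi5 s1 s3 q i) p := by
    intro i
    fin_cases i <;> simp [snakeXi5] <;> fun_prop
  have h2 := hasFDerivAt_apply (𝕜 := ℝ) (F' := fun _ : Fin 5 => ℝ) 2 p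
  have h3 := (hasFDerivAt_apply (𝕜 := ℝ) (F' := fun _ : Fin 5 => ℝ) 3 p).sin
  have h4 := (hasFDerivAt_apply (𝕜 := ℝ) (F' := fun _ : Fin 5 => ℝ) 4 p).sin
  ext i
  rw [fderiv_coord hd]
  fin_cases i
  · refine (congrArg (· v) h2.cos.fderiv).trans ?_
    simp
  · refine (congrArg (· v) h2.sin.fderiv).trans ?_
    simp
  · simp [snakeXi5]
  · refine (congrArg (· v) (h3.const_mul (1 / s1)).fderiv).trans ?_
    simp
  · refine (congrArg (· v) (h4.const_mul (1 / s3)).neg.fderiv).trans ?_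
    simp

lemma fderiv_snakeSigma1 (p v : Fin 5 → ℝ) : fderiv ℝ snakeSigma1 p v = 0 := by
  have h : snakeSigma1 = fun _ => ![1, 0, 0, 0, 0] := rfl
  simp [h]

lemma fderiv_snakeSigma2 (p v : Fin 5 → ℝ) : fderiv ℝ snakeSigma2 p v = 0 := by
  have h : snakeSigma2 = fun _ => ![0, 1, 0, 0, 0] := rfl
  simp [h]

lemma fderiv_snakeSigma3 (p v : Fin 5 → ℝ) :
    fderiv ℝ snakeSigma3 p v = ![v 1, -v 0, 0, 0, 0] := by
  have hd : ∀ i, DifferentiableAt ℝ (fun q => snakeSigma3 q i) p := by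
    intro i
    fin_cases i <;> simp [snakeSigma3] <;> fun_prop
  have h0 := hasFDerivAt_apply (𝕜 := ℝ) (F' := fun _ : Fin 5 => ℝ) 0 p
  have h1 := hasFDerivAt_apply (𝕜 := ℝ) (F' := fun _ : Fin 5 => ℝ) 1 p
  ext i
  rw [fderiv_coord hd]
  fin_cases i
  · refine (congrArg (· v) h1.fderiv).trans ?_
    simp
  · refine (congrArg (· v) h0.neg.fderiv).trans ?_
    simp
  · simp [snakeSigma3]
  · simp [snakeSigma3]
  · simp [snakeSigma3]

/-- The generators `ς₁, ς₂, ς₃` of `𝔰𝔢(2)` are infinitesimal symmetries of the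
distribution spanned by `ξ₄` and `ξ₅`: all brackets `[ςᵢ, ξ₄]` and `[ςᵢ, ξ₅]` vanish. -/
theorem snake_se2_symmetries (s1 s2 s3 : ℝ) (hs1 : 0 < s1) (hs3 : 0 < s3)
    (hs2 : s2 ∈ Set.Ioo (0 : ℝ) 1) (p : Fin 5 → ℝ) :
    (fderiv ℝ (snakeXi4 s1 s2 s3) p (snakeSigma1 p)
        - fderiv ℝ snakeSigma1 p (snakeXi4 s1 s2 s3 p) = 0) ∧
    (fderiv ℝ (snakeXi5 s1 s3) p (snakeSigma1 p)
        - fderiv ℝ snakeSigma1 p (snakeXi5 s1 s3 p) = 0) ∧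
    (fderiv ℝ (snakeXi4 s1 s2 s3) p (snakeSigma2 p)
        - fderiv ℝ snakeSigma2 p (snakeXi4 s1 s2 s3 p) = 0) ∧
    (fderiv ℝ (snakeXi5 s1 s3) p (snakeSigma2 p)
        - fderiv ℝ snakeSigma2 p (snakeXi5 s1 s3 p) = 0) ∧
    (fderiv ℝ (snakeXi4 s1 s2 s3) p (snakeSigma3 p)
        - fderiv ℝ snakeSigma3 p (snakeXi4 s1 s2 s3 p) = 0) ∧
    (fderiv ℝ (snakeXi5 s1 s3) p (snakeSigma3 p)
        - fderiv ℝ snakeSigma3 p (snakeXi5 s1 s3 p) = 0) := by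
  simp only [fderiv_snakeXi4, fderiv_snakeXi5, fderiv_snakeSigma1, fderiv_snakeSigma2,
    fderiv_snakeSigma3]
  refine ⟨?_, ?_, ?_, ?_, ?_, ?_⟩ <;> ext i <;> fin_cases i <;>
    simp [snakeXi4, snakeXi5, snakeSigma1, snakeSigma2, snakeSigma3]
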